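/- arXiv:2002.01178 — 3 statements merged into one kernel-verified Lean document; each statement's English description precedes it below -/
import Mathlib

section
/- Let x and y be binary strings with m' := |x̃| ≥ n' := |ỹ|, let a := |x^{(1)}| and b := |y^{(1)}|, and suppose x[1] ≠ y[1]. Then: if m' = n' = 1, then dtw(x,y)² = max(|x|, |y|); if m' > n' = 1, then dtw(x,y)² = a + dtw(x[a+1, |x|], y)²; and if n' > 1, then dtw(x,y)² = min( a + dtw(x[a+1, |x|], y)², b + dtw(x, y[b+1, |y|])² ). -/
/-- One step of a warping path: move down, right, or diagonally. -/
def wpStep (a b : ℕ × ℕ) : Prop :=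
  (b.1 = a.1 + 1 ∧ b.2 = a.2) ∨ (b.1 = a.1 ∧ b.2 = a.2 + 1) ∨
    (b.1 = a.1 + 1 ∧ b.2 = a.2 + 1)

/-- A warping path of order `m × n` (0-based indices). -/
def IsWarpingPath (m n : ℕ) (p : List (ℕ × ℕ)) : Prop :=
  p.head? = some (0, 0) ∧ p.getLast? = some (m - 1, n - 1) ∧
    List.Chain' wpStep p ∧ ∀ q ∈ p, q.1 < m ∧ q.2 < n

/-- The cost of aligning binary strings `x` and `y` along path `p`:
the number of aligned mismatching pairs (for binary symbols,
`(x[i] - y[j])^2` is `0` if the symbols agree and `1` otherwise). -/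
def pathCost (x y : List Bool) (p : List (ℕ × ℕ)) : ℕ :=
  (p.map fun q => if x.getD q.1 false = y.getD q.2 false then 0 else 1).sum

/-- The squared dynamic time warping distance `dtw(x,y)²` of two binary strings. -/
noncomputable def dtwSq (x y : List Bool) : ℕ :=
  sInf {c | ∃ p, IsWarpingPath x.length y.length p ∧ pathCost x y p = c}

/-- The dynamic time warping distance `dtw(x,y)`. -/
noncomputable def dtw (x y : List Bool) : ℝ :=
  Real.sqrt (dtwSq x y)

/-- The condensation of a binary string: collapse every maximal run of equal
consecutive symbols to a single symbol. -/
def condense : List Bool → List Bool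
  | [] => []
  | [a] => [a]
  | a :: b :: rest => if a = b then condense (b :: rest) else a :: condense (b :: rest)

/-- Auxiliary function collecting the block sizes of a binary string. -/
def blockSizesAux : Bool → ℕ → List Bool → List ℕ
  | _, cnt, [] => [cnt]
  | cur, cnt, a :: rest =>
      if a = cur then blockSizesAux cur (cnt + 1) rest
      else cnt :: blockSizesAux a 1 rest

/-- The list of block sizes of a binary string (sizes of the maximal runs
of equal consecutive symbols, from left to right). -/
def blockSizes : List Bool → List ℕ
  | [] => []
  | a :: rest => blockSizesAux a 1 rest

/-- The objective `F(z) = Σᵢ dtw(sᵢ, z)²`. -/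
noncomputable def Fobj (ss : List (List Bool)) (z : List Bool) : ℕ :=
  (ss.map fun s => dtwSq s z).sum

/-- `z` is a mean of the strings `ss`: a nonempty binary string minimizing
`F` among all nonempty binary strings. -/
def IsMean (ss : List (List Bool)) (z : List Bool) : Prop :=
  z ≠ [] ∧ ∀ w : List Bool, w ≠ [] → Fobj ss z ≤ Fobj ss w

/-- The optimal value of a Min 1-Separated Sum instance with integers `b`
(1-based indexing) and selection size `r`: minimize the sum of `r` selected
integers, no two of which are consecutive. -/
noncomputable def mssValue (b : List ℕ) (r : ℕ) : ℕ :=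
  sInf {s | ∃ I : List ℕ, I.length = r ∧ (∀ i ∈ I, 1 ≤ i ∧ i ≤ b.length) ∧
    List.Chain' (fun a c => a + 2 ≤ c) I ∧
    (I.map fun i => b.getD (i - 1) 0).sum = s}

/-!
The squared distance satisfies the usual dynamic-programming recursion: the cost of the first pair
plus the least cost of the three possible continuations. If `x = uᵃx'` and `y = vᵇy'` with `u ≠ v`,
every pair costs `1` until one of the two first blocks is exhausted, and whichever is exhausted
first, the rest of the other can be restored for free: `x'` is empty or begins with `v`, so a
surplus `v` in front of the other string is matched against that symbol, and symmetrically for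
`y'`. If there is no `x'` and no `y'`, all pairs mismatch and a shortest path has length `max a b`.
-/

section Recursion

variable {α : Type*} [DecidableEq α]

/-- The dynamic-programming recursion for the squared dynamic time warping distance with `0`/`1`
mismatch costs. The value is `⊤` when exactly one string is empty, so that a continuation which
leaves the grid is never selected, and `0` on two empty strings, so that a path may end. -/
noncomputable def dtwRec : List α → List α → ℕ∞
  | [], [] => 0
  | [], _ :: _ => ⊤
  | _ :: _, [] => ⊤
  | a :: x, b :: y => (if a = b then 0 else 1) +
      min (dtwRec x (b :: y)) (min (dtwRec (a :: x) y) (dtwRec x y))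
termination_by x y => x.length + y.length

lemma dtwRec_nil_left {y : List α} (hy : y ≠ []) : dtwRec [] y = ⊤ := by
  cases y with
  | nil => contradiction
  | cons b y => rw [dtwRec]

lemma dtwRec_nil_right {x : List α} (hx : x ≠ []) : dtwRec x [] = ⊤ := by
  cases x with
  | nil => contradiction
  | cons a x => rw [dtwRec]

lemma dtwRec_comm (x y : List α) : dtwRec x y = dtwRec y x := by
  induction x, y using dtwRec.induct with
  | case1 => rfl
  | case2 b y => simp only [dtwRec]
  | case3 a x => simp only [dtwRec]
  | case4 a x b y ih_left ih_right ih_both =>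
    rw [dtwRec, dtwRec, ih_left, ih_right, ih_both, min_left_comm]
    simp only [eq_comm]

lemma dtwRec_cons_left_le {x y : List α} (a : α) (h : x ≠ [] ∨ y ≠ []) :
    dtwRec (a :: x) y ≤ 1 + dtwRec x y := by
  cases y with
  | nil => simp [dtwRec_nil_right (h.resolve_right (by simp))]
  | cons b y =>
    rw [dtwRec]
    gcongr
    · split_ifs <;> simp
    · exact min_le_left _ _

lemma dtwRec_append_left_le {x y : List α} (w : List α) (h : x ≠ [] ∨ y ≠ []) :
    dtwRec (w ++ x) y ≤ w.length + dtwRec x y := by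
  induction w with
  | nil => simp
  | cons a w ih =>
    calc dtwRec (a :: (w ++ x)) y
        ≤ 1 + dtwRec (w ++ x) y :=
          dtwRec_cons_left_le a (h.imp_left (List.append_ne_nil_of_right_ne_nil _))
      _ ≤ 1 + (w.length + dtwRec x y) := by gcongr
      _ = (a :: w).length + dtwRec x y := by push_cast [List.length_cons]; ring

lemma dtwRec_append_right_le {x y : List α} (w : List α) (h : x ≠ [] ∨ y ≠ []) :
    dtwRec x (w ++ y) ≤ w.length + dtwRec x y := by
  rw [dtwRec_comm x, dtwRec_comm x]
  exact dtwRec_append_left_le w h.symm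

lemma dtwRec_cons_right_le_of_head {x y : List α} {v : α} (hx : ∀ s ∈ x.head?, s = v)
    (h : x ≠ [] ∨ y ≠ []) : dtwRec x (v :: y) ≤ dtwRec x y := by
  cases x with
  | nil => simp [dtwRec_nil_left (h.resolve_left (by simp))]
  | cons s x =>
    obtain rfl : s = v := hx s rfl
    rw [dtwRec, if_pos rfl, zero_add]
    exact (min_le_right _ _).trans (min_le_left _ _)

lemma dtwRec_cons_left_le_of_head {x y : List α} {u : α} (hy : ∀ t ∈ y.head?, t = u)
    (h : x ≠ [] ∨ y ≠ []) : dtwRec (u :: x) y ≤ dtwRec x y := by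
  rw [dtwRec_comm, dtwRec_comm x]
  exact dtwRec_cons_right_le_of_head hy h.symm

lemma dtwRec_le_max_length {x y : List α} (hx : x ≠ []) (hy : y ≠ []) :
    dtwRec x y ≤ (max x.length y.length : ℕ) := by
  induction x, y using dtwRec.induct with
  | case1 | case2 | case3 => contradiction
  | case4 a x b y ih_left ih_right ih_both =>
    suffices h : min (dtwRec x (b :: y)) (min (dtwRec (a :: x) y) (dtwRec x y)) ≤
        (max x.length y.length : ℕ) by
      calc dtwRec (a :: x) (b :: y)
          ≤ 1 + (max x.length y.length : ℕ) := by
            rw [dtwRec]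
            gcongr
            split_ifs <;> simp
        _ = (max (a :: x).length (b :: y).length : ℕ) := by
            rw [List.length_cons, List.length_cons, max_add_add_right, add_comm, Nat.cast_succ]
    rcases x with - | ⟨a', x⟩ <;> rcases y with - | ⟨b', y⟩
    · simp [dtwRec]
    · exact min_le_of_right_le <| min_le_of_left_le <|
        (ih_right (by simp) (by simp)).trans <| by simp
    · exact min_le_of_left_le <| (ih_left (by simp) (by simp)).trans <| by simp
    · exact min_le_of_right_le <| min_le_of_right_le <| ih_both (by simp) (by simp)

lemma max_length_le_dtwRec {x y : List α} (h : x.Disjoint y) :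
    (max x.length y.length : ℕ) ≤ dtwRec x y := by
  induction x, y using dtwRec.induct with
  | case1 => simp
  | case2 | case3 => simp [dtwRec]
  | case4 a x b y ih_left ih_right ih_both =>
    have hab : a ≠ b := by rintro rfl; exact h List.mem_cons_self List.mem_cons_self
    have hx : x.Disjoint (b :: y) := List.disjoint_of_disjoint_cons_left h
    have hy : (a :: x).Disjoint y := List.disjoint_of_disjoint_cons_right h
    have hxy : x.Disjoint y := List.disjoint_of_disjoint_cons_right hx
    rw [dtwRec, if_neg hab, List.length_cons, List.length_cons, max_add_add_right, add_comm,
      Nat.cast_add, Nat.cast_one]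
    gcongr
    refine le_min ((Nat.cast_le.2 ?_).trans (ih_left hx))
      (le_min ((Nat.cast_le.2 ?_).trans (ih_right hy)) (ih_both hxy)) <;>
    · rw [List.length_cons]
      omega

lemma min_le_dtwRec_replicate_append {u v : α} {x y : List α} (huv : u ≠ v)
    (hx : ∀ s ∈ x.head?, s = v) (hy : ∀ t ∈ y.head?, t = u) (h : x ≠ [] ∨ y ≠ []) (a b : ℕ) :
    min (a + dtwRec x (.replicate b v ++ y)) (b + dtwRec (.replicate a u ++ x) y) ≤
      dtwRec (.replicate a u ++ x) (.replicate b v ++ y) := by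
  induction a generalizing b with
  | zero => simp
  | succ a ih_left =>
    induction b with
    | zero => simp
    | succ b ih_right =>
      have free_v : dtwRec x (v :: (.replicate b v ++ y)) ≤ dtwRec x (.replicate b v ++ y) :=
        dtwRec_cons_right_le_of_head hx (h.imp_right (List.append_ne_nil_of_right_ne_nil _))
      have free_u : dtwRec (u :: (.replicate a u ++ x)) y ≤ dtwRec (.replicate a u ++ x) y :=
        dtwRec_cons_left_le_of_head hy (h.imp_left (List.append_ne_nil_of_right_ne_nil _))
      have ih_both := ih_left b
      replace ih_left := ih_left (b + 1)
      simp only [List.replicate_succ, List.cons_append, Nat.cast_succ] at ih_left ih_right ⊢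
      rw [dtwRec, if_neg huv, ← min_add_add_left, ← min_add_add_left]
      refine le_min ?_ (le_min ?_ ?_)
      · grw [← ih_left, ← min_add_add_left, free_u]
        exact min_le_min (by rw [add_right_comm, add_comm 1, add_right_comm]) le_add_self
      · grw [← ih_right, ← min_add_add_left, free_v]
        exact min_le_min le_add_self (by rw [← add_assoc, add_comm 1])
      · grw [← ih_both, ← min_add_add_left, free_u, free_v]
        exact min_le_min (by rw [← add_assoc, add_comm 1]) (by rw [← add_assoc, add_comm 1])

theorem dtwRec_replicate_append {u v : α} {x y : List α} (huv : u ≠ v)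
    (hx : ∀ s ∈ x.head?, s = v) (hy : ∀ t ∈ y.head?, t = u) (h : x ≠ [] ∨ y ≠ []) (a b : ℕ) :
    dtwRec (.replicate a u ++ x) (.replicate b v ++ y) =
      min (a + dtwRec x (.replicate b v ++ y)) (b + dtwRec (.replicate a u ++ x) y) := by
  refine le_antisymm (le_min ?_ ?_) (min_le_dtwRec_replicate_append huv hx hy h a b)
  · simpa using dtwRec_append_left_le (.replicate a u)
      (h.imp_right (List.append_ne_nil_of_right_ne_nil _))
  · simpa using dtwRec_append_right_le (.replicate b v)
      (h.imp_left (List.append_ne_nil_of_right_ne_nil _))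

end Recursion

section WarpingPaths

/-- A tail of a warping path of order `m × n`: a path in the grid from `q` to the last index pair.
It allows induction along a path with indices kept in the original strings; for `q = (0, 0)` it is
`IsWarpingPath m n` by definition. -/
def IsWarpingPathFrom (q : ℕ × ℕ) (m n : ℕ) (p : List (ℕ × ℕ)) : Prop :=
  p.head? = some q ∧ p.getLast? = some (m - 1, n - 1) ∧
    List.IsChain wpStep p ∧ ∀ r ∈ p, r.1 < m ∧ r.2 < n

lemma isWarpingPathFrom_singleton {q : ℕ × ℕ} {m n : ℕ} :
    IsWarpingPathFrom q m n [q] ↔ q.1 + 1 = m ∧ q.2 + 1 = n := by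
  obtain ⟨i, j⟩ := q
  simp only [IsWarpingPathFrom, List.head?_cons, List.getLast?_singleton, Option.some_inj,
    Prod.mk.injEq, List.isChain_singleton, List.mem_singleton, forall_eq, true_and]
  omega

lemma isWarpingPathFrom_cons_cons {q r : ℕ × ℕ} {m n : ℕ} {p : List (ℕ × ℕ)} :
    IsWarpingPathFrom q m n (q :: r :: p) ↔
      (q.1 < m ∧ q.2 < n) ∧ wpStep q r ∧ IsWarpingPathFrom r m n (r :: p) := by
  simp only [IsWarpingPathFrom, List.head?_cons, List.getLast?_cons_cons,
    List.isChain_cons_cons, List.forall_mem_cons (a := q)]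
  tauto

lemma pathCost_cons (x y : List Bool) (q : ℕ × ℕ) (p : List (ℕ × ℕ)) :
    pathCost x y (q :: p) =
      (if x.getD q.1 false = y.getD q.2 false then 0 else 1) + pathCost x y p := by
  simp [pathCost]

lemma dtwRec_drop {x y : List Bool} {i j : ℕ} (hi : i < x.length) (hj : j < y.length) :
    dtwRec (x.drop i) (y.drop j) =
      (if x.getD i false = y.getD j false then 0 else 1) +
        min (dtwRec (x.drop (i + 1)) (y.drop j))
          (min (dtwRec (x.drop i) (y.drop (j + 1)))
            (dtwRec (x.drop (i + 1)) (y.drop (j + 1)))) := by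
  rw [List.drop_eq_getElem_cons hi, List.drop_eq_getElem_cons hj, dtwRec,
    List.getD_eq_getElem _ _ hi, List.getD_eq_getElem _ _ hj]

lemma dtwRec_drop_le_of_wpStep {x y : List Bool} {i j : ℕ} {r : ℕ × ℕ}
    (hi : i < x.length) (hj : j < y.length) (h : wpStep (i, j) r) :
    dtwRec (x.drop i) (y.drop j) ≤
      (if x.getD i false = y.getD j false then 0 else 1) +
        dtwRec (x.drop r.1) (y.drop r.2) := by
  rw [dtwRec_drop hi hj]
  gcongr
  rcases h with ⟨h₁, h₂⟩ | ⟨h₁, h₂⟩ | ⟨h₁, h₂⟩ <;> simp [h₁, h₂]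

lemma exists_wpStep_dtwRec_drop_eq {x y : List Bool} {i j : ℕ}
    (hi : i < x.length) (hj : j < y.length) :
    ∃ r, wpStep (i, j) r ∧ dtwRec (x.drop i) (y.drop j) =
      (if x.getD i false = y.getD j false then 0 else 1) +
        dtwRec (x.drop r.1) (y.drop r.2) := by
  rw [dtwRec_drop hi hj]
  rcases min_choice (dtwRec (x.drop (i + 1)) (y.drop j)) (min (dtwRec (x.drop i) (y.drop (j + 1)))
    (dtwRec (x.drop (i + 1)) (y.drop (j + 1)))) with h | h
  · exact ⟨(i + 1, j), by simp [wpStep], by rw [h]⟩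
  rw [h]
  rcases min_choice (dtwRec (x.drop i) (y.drop (j + 1)))
    (dtwRec (x.drop (i + 1)) (y.drop (j + 1))) with h | h
  · exact ⟨(i, j + 1), by simp [wpStep], by rw [h]⟩
  · exact ⟨(i + 1, j + 1), by simp [wpStep], by rw [h]⟩

lemma IsWarpingPathFrom.dtwRec_drop_le_pathCost {x y : List Bool} {q : ℕ × ℕ} {p : List (ℕ × ℕ)}
    (hp : IsWarpingPathFrom q x.length y.length p) :
    dtwRec (x.drop q.1) (y.drop q.2) ≤ pathCost x y p := by
  induction p generalizing q with
  | nil => simp [IsWarpingPathFrom] at hp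
  | cons q' p ih =>
    obtain rfl : q' = q := by simpa using hp.1
    rw [pathCost_cons]
    push_cast
    cases p with
    | nil =>
      obtain ⟨hi, hj⟩ := isWarpingPathFrom_singleton.1 hp
      refine (dtwRec_drop_le_of_wpStep (r := (q'.1 + 1, q'.2 + 1)) (by omega) (by omega)
        (by simp [wpStep])).trans ?_
      simp [hi, hj, dtwRec]
    | cons r p =>
      obtain ⟨⟨hi, hj⟩, hstep, hp⟩ := isWarpingPathFrom_cons_cons.1 hp
      grw [dtwRec_drop_le_of_wpStep hi hj hstep, ih hp]

theorem exists_isWarpingPathFrom_pathCost_eq {x y : List Bool} {i j : ℕ}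
    (hi : i < x.length) (hj : j < y.length) :
    ∃ p, IsWarpingPathFrom (i, j) x.length y.length p ∧
      pathCost x y p = dtwRec (x.drop i) (y.drop j) := by
  obtain ⟨⟨k, l⟩, hstep, hrec⟩ := exists_wpStep_dtwRec_drop_eq hi hj
  have hfin : dtwRec (x.drop k) (y.drop l) ≠ ⊤ := by
    intro htop
    have := dtwRec_le_max_length (x := x.drop i) (y := y.drop j) (by simpa) (by simpa)
    simp [hrec, htop] at this
  rw [hrec]
  by_cases hk : k < x.length <;> by_cases hl : l < y.length
  · obtain ⟨p, hp, hcost⟩ := exists_isWarpingPathFrom_pathCost_eq hk hl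
    obtain ⟨p, rfl⟩ := List.head?_eq_some_iff.1 hp.1
    refine ⟨_, isWarpingPathFrom_cons_cons.2 ⟨⟨hi, hj⟩, hstep, hp⟩, ?_⟩
    rw [pathCost_cons, Nat.cast_add, hcost]
    push_cast
    rfl
  · simp [List.drop_of_length_le (not_lt.1 hl), dtwRec_nil_right, hk] at hfin
  · simp [List.drop_of_length_le (not_lt.1 hk), dtwRec_nil_left, hl] at hfin
  · refine ⟨[(i, j)], isWarpingPathFrom_singleton.2 ?_, ?_⟩
    · simp only [wpStep] at hstep ⊢
      omega
    · simp [List.drop_of_length_le (not_lt.1 hk), List.drop_of_length_le (not_lt.1 hl), dtwRec,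
        pathCost]
termination_by (x.length - i) + (y.length - j)
decreasing_by
  simp only [wpStep] at hstep
  omega

theorem coe_dtwSq_eq_dtwRec {x y : List Bool} (hx : x ≠ []) (hy : y ≠ []) :
    (dtwSq x y : ℕ∞) = dtwRec x y := by
  obtain ⟨p, hp, hcost⟩ := exists_isWarpingPathFrom_pathCost_eq
    (List.length_pos_iff.2 hx) (List.length_pos_iff.2 hy)
  rw [List.drop_zero, List.drop_zero] at hcost
  apply le_antisymm
  · rw [← hcost]
    exact Nat.cast_le.2 (Nat.sInf_le ⟨p, hp, rfl⟩)
  · obtain ⟨p', hp', hcost'⟩ : dtwSq x y ∈ {c | ∃ p, IsWarpingPath x.length y.length p ∧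
        pathCost x y p = c} := Nat.sInf_mem ⟨_, p, hp, rfl⟩
    rw [← hcost']
    exact IsWarpingPathFrom.dtwRec_drop_le_pathCost (q := (0, 0)) hp'

end WarpingPaths

section Blocks

lemma exists_eq_replicate_append {α : Type*} {x : List α} (hx : x ≠ []) :
    ∃ (u : α) (a : ℕ) (x' : List α), x = .replicate (a + 1) u ++ x' ∧ x'.head? ≠ some u := by
  induction x with
  | nil => contradiction
  | cons u x ih =>
    by_cases hu : x.head? = some u
    · obtain ⟨v, a, x', rfl, hx'⟩ := ih (by rintro rfl; simp at hu)
      obtain rfl : v = u := by simpa [List.replicate_succ] using hu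
      exact ⟨v, a + 1, x', rfl, hx'⟩
    · exact ⟨u, 0, x, rfl, hu⟩

variable {u : Bool} {x : List Bool}

lemma condense_replicate_append (hx : x.head? ≠ some u) (a : ℕ) :
    condense (.replicate (a + 1) u ++ x) = u :: condense x := by
  induction a with
  | zero =>
    cases x with
    | nil => simp [condense]
    | cons b x =>
      have hb : u ≠ b := by rintro rfl; simp at hx
      simp [condense, hb]
  | succ a ih => simpa [List.replicate_succ, condense] using ih

lemma condense_eq_nil : condense x = [] ↔ x = [] := by
  refine ⟨fun h => ?_, fun h => by rw [h, condense]⟩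
  by_contra hx
  obtain ⟨u, a, x', rfl, hx'⟩ := exists_eq_replicate_append hx
  simp [condense_replicate_append hx'] at h

lemma blockSizesAux_replicate_append (hx : x.head? ≠ some u) (k a : ℕ) :
    (blockSizesAux u k (.replicate a u ++ x)).getD 0 0 = k + a := by
  induction a generalizing k with
  | zero =>
    cases x with
    | nil => simp [blockSizesAux]
    | cons b x =>
      have hb : b ≠ u := by rintro rfl; simp at hx
      simp [blockSizesAux, hb]
  | succ a ih =>
    rw [List.replicate_succ, List.cons_append, blockSizesAux, if_pos rfl, ih]
    omega

lemma blockSizes_replicate_append (hx : x.head? ≠ some u) (a : ℕ) :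
    (blockSizes (.replicate (a + 1) u ++ x)).getD 0 0 = a + 1 :=
  (blockSizesAux_replicate_append hx 1 a).trans (add_comm 1 a)

lemma eq_of_mem_head?_of_head?_ne {v : Bool} (huv : u ≠ v) (hx : x.head? ≠ some u) :
    ∀ s ∈ x.head?, s = v := by
  intro s hs
  have hsu : s ≠ u := fun h => hx (h ▸ hs)
  exact (Bool.eq_not.2 hsu).trans (Bool.eq_not.2 huv.symm).symm

lemma dtwSq_replicate_replicate {v : Bool} (huv : u ≠ v) (a b : ℕ) :
    dtwSq (.replicate (a + 1) u) (.replicate (b + 1) v) = max (a + 1) (b + 1) := by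
  have hdisj : (List.replicate (a + 1) u).Disjoint (List.replicate (b + 1) v) := by
    simpa [List.disjoint_left] using huv
  have h := (dtwRec_le_max_length (by simp) (by simp)).antisymm (max_length_le_dtwRec hdisj)
  rw [← coe_dtwSq_eq_dtwRec (by simp) (by simp)] at h
  simpa only [List.length_replicate, Nat.cast_inj] using h

lemma dtwSq_replicate_append_replicate {v : Bool} (huv : u ≠ v) (hx : x.head? ≠ some u)
    (hx_ne : x ≠ []) (a b : ℕ) :
    dtwSq (.replicate (a + 1) u ++ x) (.replicate (b + 1) v) =
      a + 1 + dtwSq x (.replicate (b + 1) v) := by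
  have h := dtwRec_replicate_append (y := []) huv (eq_of_mem_head?_of_head?_ne huv hx) (by simp)
    (.inl hx_ne) (a + 1) (b + 1)
  rw [dtwRec_nil_right (by simp), add_top, min_top_right, List.append_nil,
    ← coe_dtwSq_eq_dtwRec (by simp) (by simp), ← coe_dtwSq_eq_dtwRec hx_ne (by simp)] at h
  exact_mod_cast h

lemma dtwSq_replicate_append_replicate_append {v : Bool} {y : List Bool} (huv : u ≠ v)
    (hx : x.head? ≠ some u) (hy : y.head? ≠ some v) (hx_ne : x ≠ []) (hy_ne : y ≠ []) (a b : ℕ) :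
    dtwSq (.replicate (a + 1) u ++ x) (.replicate (b + 1) v ++ y) =
      min (a + 1 + dtwSq x (.replicate (b + 1) v ++ y))
        (b + 1 + dtwSq (.replicate (a + 1) u ++ x) y) := by
  have h := dtwRec_replicate_append huv (eq_of_mem_head?_of_head?_ne huv hx)
    (eq_of_mem_head?_of_head?_ne huv.symm hy) (.inl hx_ne) (a + 1) (b + 1)
  rw [← coe_dtwSq_eq_dtwRec (by simp) (by simp), ← coe_dtwSq_eq_dtwRec hx_ne (by simp),
    ← coe_dtwSq_eq_dtwRec (by simp) hy_ne] at h
  rw [← Nat.cast_inj (R := ℕ∞), Nat.mono_cast.map_min]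
  exact_mod_cast h

end Blocks

/-- recursive case distinction for `dtw(x,y)²` when the first
symbols of `x` and `y` differ, where `a = |x⁽¹⁾|` and `b = |y⁽¹⁾|`. -/
theorem dtwSq_first_symbol_differs (x y : List Bool) (hx : x ≠ []) (hy : y ≠ [])
    (hm : (condense y).length ≤ (condense x).length)
    (hne : x.head? ≠ y.head?) :
    ((condense x).length = 1 → (condense y).length = 1 →
      dtwSq x y = max x.length y.length) ∧
    (1 < (condense x).length → (condense y).length = 1 →
      dtwSq x y = (blockSizes x).getD 0 0 +
        dtwSq (x.drop ((blockSizes x).getD 0 0)) y) ∧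
    (1 < (condense y).length →
      dtwSq x y = min
        ((blockSizes x).getD 0 0 + dtwSq (x.drop ((blockSizes x).getD 0 0)) y)
        ((blockSizes y).getD 0 0 + dtwSq x (y.drop ((blockSizes y).getD 0 0)))) := by
  obtain ⟨u, a, x', rfl, hx'⟩ := exists_eq_replicate_append hx
  obtain ⟨v, b, y', rfl, hy'⟩ := exists_eq_replicate_append hy
  have huv : u ≠ v := by simpa [List.replicate_succ] using hne
  have drop_block (w : Bool) (k : ℕ) (z : List Bool) :
      (List.replicate (k + 1) w ++ z).drop (k + 1) = z := List.drop_left' List.length_replicate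
  simp only [condense_replicate_append hx', condense_replicate_append hy',
    blockSizes_replicate_append hx', blockSizes_replicate_append hy', drop_block,
    List.length_cons, Nat.add_eq_right, Nat.lt_add_left_iff_pos, List.length_eq_zero_iff,
    List.length_pos_iff, add_le_add_iff_right, ne_eq, condense_eq_nil] at hm ⊢
  refine ⟨?_, ?_, fun hy_ne => ?_⟩
  · rintro rfl rfl
    simpa using dtwSq_replicate_replicate huv a b
  · rintro hx_ne rfl
    simpa using dtwSq_replicate_append_replicate huv hx' hx_ne a b
  · have hx_ne : x' ≠ [] := by
      rintro rfl
      simp [condense, condense_eq_nil, hy_ne] at hm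
    exact dtwSq_replicate_append_replicate_append huv hx' hy' hx_ne hy_ne a b
end

section
/- Let x and y be binary strings with m' := |x̃| ≥ n' := |ỹ|, let a' := |x^{(m')}| and b' := |y^{(n')}|, and suppose x[1] = y[1] and x[|x|] ≠ y[|y|]. Then: if n' = 1, then dtw(x,y)² = a' + dtw(x[1, |x|−a'], y)²; and if n' > 1, then dtw(x,y)² = min( a' + dtw(x[1, |x|−a'], y)², b' + dtw(x, y[1, |y|−b'])² ). -/
/-!
Aligning the last blocks of `x` and `y` with each other costs `1` per cell, whereas the row just
before the last block of `x` and the column just before the last block of `y` cost nothing along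
the other string's last block, since the symbols alternate between blocks. Hence a path through the
rectangle of the two last blocks can be replaced by a free walk along that row or column followed
by one straight run through a last block, paying exactly the length of that block. If `y` is a
single block there is no such column, and only the first alternative remains.
-/

/-- The least total weight `∑ f i j` along a warping path from `(0, 0)` to `(i, j)`, given by the
dynamic programming recursion of dynamic time warping. -/
def minPathCost (f : ℕ → ℕ → ℕ) : ℕ → ℕ → ℕ
  | 0, 0 => f 0 0
  | i + 1, 0 => minPathCost f i 0 + f (i + 1) 0
  | 0, j + 1 => minPathCost f 0 j + f 0 (j + 1)
  | i + 1, j + 1 =>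
    min (minPathCost f i j) (min (minPathCost f i (j + 1)) (minPathCost f (i + 1) j))
      + f (i + 1) (j + 1)

namespace minPathCost

variable {f g : ℕ → ℕ → ℕ}

theorem succ_left_le (f : ℕ → ℕ → ℕ) (i j : ℕ) :
    minPathCost f (i + 1) j ≤ minPathCost f i j + f (i + 1) j := by
  cases j <;> simp only [minPathCost] <;> omega

theorem succ_right_le (f : ℕ → ℕ → ℕ) (i j : ℕ) :
    minPathCost f i (j + 1) ≤ minPathCost f i j + f i (j + 1) := by
  cases i <;> simp only [minPathCost] <;> omega

theorem le_of_wpStep (f : ℕ → ℕ → ℕ) {i j i' j' : ℕ} (h : wpStep (i, j) (i', j')) :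
    minPathCost f i' j' ≤ minPathCost f i j + f i' j' := by
  simp only [wpStep] at h
  rcases h with ⟨rfl, rfl⟩ | ⟨rfl, rfl⟩ | ⟨rfl, rfl⟩
  · exact succ_left_le f i j'
  · exact succ_right_le f i' j
  · simp only [minPathCost]
    omega

theorem swap (f : ℕ → ℕ → ℕ) (i j : ℕ) :
    minPathCost (Function.swap f) j i = minPathCost f i j := by
  fun_induction minPathCost f i j <;> simp_all only [minPathCost, Function.swap, min_comm]

theorem congr {i j : ℕ} (h : ∀ i' ≤ i, ∀ j' ≤ j, f i' j' = g i' j') :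
    minPathCost f i j = minPathCost g i j := by
  fun_induction minPathCost f i j <;> grind [minPathCost]

theorem add_left_le (hf : ∀ i j, f i j ≤ 1) (i j k : ℕ) :
    minPathCost f (i + k) j ≤ minPathCost f i j + k := by
  induction k with
  | zero => rfl
  | succ k ih =>
    have hstep := succ_left_le f (i + k) j
    have hweight := hf (i + k + 1) j
    rw [← add_assoc]
    omega

theorem add_le_of_row_eq_zero {M a n : ℕ} (hrow : ∀ j < n, f M (j + 1) = 0)
    (hblock : ∀ k < a, ∀ j ≤ n, 1 ≤ f (M + k + 1) j) :
    minPathCost f M n + a ≤ minPathCost f (M + a) n := by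
  induction a generalizing n with
  | zero => rfl
  | succ a ih =>
    induction n with
    | zero =>
      have hup := ih hrow fun k hk => hblock k (by omega)
      have hcost := hblock a (by omega) 0 le_rfl
      simp only [← add_assoc, minPathCost]
      omega
    | succ n ihn =>
      have hup := ih hrow fun k hk => hblock k (by omega)
      have hdiag := ih (n := n) (fun j hj => hrow j (by omega))
        fun k hk j hj => hblock k (by omega) j (by omega)
      have hleft := ihn (fun j hj => hrow j (by omega)) fun k hk j hj => hblock k hk j (by omega)
      have hmove := succ_right_le f M n
      have hfree := hrow n (by omega)
      have hcost := hblock a (by omega) (n + 1) le_rfl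
      simp only [← add_assoc, minPathCost] at hleft ⊢
      omega

theorem min_le_of_row_eq_zero_of_col_eq_zero {M N a b : ℕ}
    (hrow : ∀ l < b, f M (N + l + 1) = 0) (hcol : ∀ k < a, f (M + k + 1) N = 0)
    (hblock : ∀ k < a, ∀ l < b, 1 ≤ f (M + k + 1) (N + l + 1)) :
    min (minPathCost f M (N + b) + a) (minPathCost f (M + a) N + b)
      ≤ minPathCost f (M + a) (N + b) := by
  induction a generalizing b with
  | zero => simp
  | succ a ih =>
    induction b with
    | zero => simp
    | succ b ihb =>
      have hup := ih hrow (fun k hk => hcol k (by omega)) fun k hk => hblock k (by omega)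
      have hdiag := ih (b := b) (fun l hl => hrow l (by omega)) (fun k hk => hcol k (by omega))
        fun k hk l hl => hblock k (by omega) l (by omega)
      have hleft := ihb (fun l hl => hrow l (by omega)) fun k hk l hl => hblock k hk l (by omega)
      have hmove_row := succ_right_le f M (N + b)
      have hmove_col := succ_left_le f (M + a) N
      have hfree_row := hrow b (by omega)
      have hfree_col := hcol a (by omega)
      have hcost := hblock a (by omega) b (by omega)
      simp only [← add_assoc, minPathCost] at hup hleft ⊢
      omega

end minPathCost

theorem IsWarpingPath.append_singleton {i j i' j' : ℕ} {p : List (ℕ × ℕ)}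
    (hp : IsWarpingPath (i + 1) (j + 1) p) (hstep : wpStep (i, j) (i', j')) :
    IsWarpingPath (i' + 1) (j' + 1) (p ++ [(i', j')]) := by
  obtain ⟨hhead, hlast, hchain, hbound⟩ := hp
  refine ⟨by simp [hhead], by simp, List.isChain_append.2 ⟨hchain, .singleton _, ?_⟩, ?_⟩
  · rintro _ hq _ ⟨⟩
    obtain rfl : (i, j) = _ := by simpa [hlast] using hq
    exact hstep
  · have hle : i ≤ i' ∧ j ≤ j' := by
      unfold wpStep at hstep
      omega
    intro q hq
    rcases List.mem_append.1 hq with hq | hq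
    · have := hbound q hq
      omega
    · simp [List.mem_singleton.1 hq]

theorem exists_isWarpingPath_sum_eq_minPathCost (f : ℕ → ℕ → ℕ) (i j : ℕ) :
    ∃ p, IsWarpingPath (i + 1) (j + 1) p ∧
      (p.map fun q => f q.1 q.2).sum = minPathCost f i j := by
  have extend {i j i' j' c : ℕ} (hstep : wpStep (i, j) (i', j'))
      (h : ∃ p, IsWarpingPath (i + 1) (j + 1) p ∧ (p.map fun q => f q.1 q.2).sum = c) :
      ∃ p, IsWarpingPath (i' + 1) (j' + 1) p ∧
        (p.map fun q => f q.1 q.2).sum = c + f i' j' := by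
    obtain ⟨p, hp, hsum⟩ := h
    exact ⟨_, hp.append_singleton hstep, by simp [hsum]⟩
  fun_induction minPathCost f i j with
  | case1 => exact ⟨[(0, 0)], ⟨rfl, rfl, .singleton _, by simp⟩, by simp⟩
  | case2 i ih => exact extend (by simp [wpStep]) ih
  | case3 j ih => exact extend (by simp [wpStep]) ih
  | case4 i j ihdiag ihup ihleft =>
    rcases min_choice (minPathCost f i j)
      (min (minPathCost f i (j + 1)) (minPathCost f (i + 1) j)) with h | h <;> rw [h]
    · exact extend (by simp [wpStep]) ihdiag
    rcases min_choice (minPathCost f i (j + 1)) (minPathCost f (i + 1) j) with h | h <;> rw [h]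
    · exact extend (by simp [wpStep]) ihup
    · exact extend (by simp [wpStep]) ihleft

theorem minPathCost_le_sum (f : ℕ → ℕ → ℕ) {i j : ℕ} {p : List (ℕ × ℕ)}
    (hhead : p.head? = some (0, 0)) (hlast : p.getLast? = some (i, j)) (hp : p.IsChain wpStep) :
    minPathCost f i j ≤ (p.map fun q => f q.1 q.2).sum := by
  induction p using List.reverseRecOn generalizing i j with
  | nil => simp at hhead
  | append_singleton p q ih =>
    obtain rfl : q = (i, j) := by simpa using hlast
    obtain ⟨hchain, -, hstep⟩ := List.isChain_append.1 hp
    rw [List.map_append, List.sum_append, List.map_singleton, List.sum_singleton]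
    rcases hlast' : p.getLast? with _ | ⟨i', j'⟩
    · obtain rfl := List.getLast?_eq_none_iff.1 hlast'
      obtain ⟨rfl, rfl⟩ : i = 0 ∧ j = 0 := by simpa using hhead
      simp [minPathCost]
    · have hne : p ≠ [] := by
        rintro rfl
        simp at hlast'
      rw [List.head?_append_of_ne_nil _ hne] at hhead
      have hprefix := ih hhead hlast' hchain
      have hlastStep := minPathCost.le_of_wpStep f (hstep _ hlast' _ rfl)
      exact hlastStep.trans (Nat.add_le_add_right hprefix _)

/-- The cost `(x[i] - y[j])²` of aligning two binary symbols, with 0-based indices. Positions past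
the end of a string read `false`, so that `pathCost x y p` is by definition the sum of
`mismatch x y` along `p`. -/
def mismatch (x y : List Bool) (i j : ℕ) : ℕ :=
  if x.getD i false = y.getD j false then 0 else 1

theorem mismatch_le_one (x y : List Bool) (i j : ℕ) : mismatch x y i j ≤ 1 := by
  unfold mismatch
  split <;> simp

theorem mismatch_comm (x y : List Bool) (i j : ℕ) : mismatch x y i j = mismatch y x j i := by
  simp only [mismatch, eq_comm]

theorem mismatch_append_left {p : List Bool} {i : ℕ} (hi : i < p.length) (u y : List Bool)
    (j : ℕ) : mismatch (p ++ u) y i j = mismatch p y i j := by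
  rw [mismatch, List.getD_append _ _ _ _ hi, mismatch]

theorem mismatch_append_right {q : List Bool} {j : ℕ} (hj : j < q.length) (x v : List Bool)
    (i : ℕ) : mismatch x (q ++ v) i j = mismatch x q i j := by
  rw [mismatch, List.getD_append _ _ _ _ hj, mismatch]

theorem dtwSq_eq_minPathCost {x y : List Bool} {m n : ℕ} (hx : x.length = m + 1)
    (hy : y.length = n + 1) : dtwSq x y = minPathCost (mismatch x y) m n := by
  rw [dtwSq, hx, hy]
  refine IsLeast.csInf_eq ⟨exists_isWarpingPath_sum_eq_minPathCost (mismatch x y) m n, ?_⟩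
  rintro _ ⟨p, ⟨hhead, hlast, hchain, -⟩, rfl⟩
  exact minPathCost_le_sum (mismatch x y) hhead hlast hchain

theorem dtwSq_comm {x y : List Bool} (hx : x ≠ []) (hy : y ≠ []) : dtwSq x y = dtwSq y x := by
  obtain ⟨m, hm⟩ := Nat.exists_eq_succ_of_ne_zero (mt List.length_eq_zero_iff.1 hx)
  obtain ⟨n, hn⟩ := Nat.exists_eq_succ_of_ne_zero (mt List.length_eq_zero_iff.1 hy)
  rw [dtwSq_eq_minPathCost hm hn, dtwSq_eq_minPathCost hn hm, ← minPathCost.swap]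
  exact minPathCost.congr fun i _ j _ => mismatch_comm x y j i

theorem dtwSq_eq_minPathCost_append_left {p y : List Bool} {m n : ℕ} (hp : p.length = m + 1)
    (hy : y.length = n + 1) (u : List Bool) :
    dtwSq p y = minPathCost (mismatch (p ++ u) y) m n := by
  rw [dtwSq_eq_minPathCost hp hy]
  exact minPathCost.congr fun i hi j _ => (mismatch_append_left (by omega) u y j).symm

theorem dtwSq_eq_minPathCost_append_right {x q : List Bool} {m n : ℕ} (hx : x.length = m + 1)
    (hq : q.length = n + 1) (v : List Bool) :
    dtwSq x q = minPathCost (mismatch x (q ++ v)) m n := by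
  rw [dtwSq_eq_minPathCost hx hq]
  exact minPathCost.congr fun i _ j hj => (mismatch_append_right (by omega) x v i).symm

theorem dtwSq_append_left_le {p y : List Bool} (hp : p ≠ []) (hy : y ≠ []) (u : List Bool) :
    dtwSq (p ++ u) y ≤ u.length + dtwSq p y := by
  obtain ⟨m, hm⟩ := Nat.exists_eq_succ_of_ne_zero (mt List.length_eq_zero_iff.1 hp)
  obtain ⟨n, hn⟩ := Nat.exists_eq_succ_of_ne_zero (mt List.length_eq_zero_iff.1 hy)
  rw [dtwSq_eq_minPathCost_append_left hm hn u,
    dtwSq_eq_minPathCost (m := m + u.length) (by simp; omega) hn, add_comm u.length]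
  exact minPathCost.add_left_le (mismatch_le_one _ _) m n u.length

theorem dtwSq_append_right_le {x q : List Bool} (hx : x ≠ []) (hq : q ≠ []) (v : List Bool) :
    dtwSq x (q ++ v) ≤ v.length + dtwSq x q := by
  rw [dtwSq_comm hx (by simp [hq]), dtwSq_comm hx hq]
  exact dtwSq_append_left_le hq hx v

theorem getD_concat_append_length {α : Type*} (p u : List α) (t d : α) :
    (p ++ [t] ++ u).getD p.length d = t := by
  simp

theorem getD_concat_append_replicate {α : Type*} {k a : ℕ} (hk : k < a) (p : List α)
    (t s d : α) : (p ++ [t] ++ List.replicate a s).getD (p.length + k + 1) d = s := by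
  rw [List.getD_append_right _ _ _ _ (by simp), List.getD_replicate _ (by simp; omega)]

theorem min_le_dtwSq_append_replicate {s t : Bool} (hst : s ≠ t) (p q : List Bool) (a b : ℕ) :
    min (a + dtwSq (p ++ [t]) (q ++ [s] ++ List.replicate b t))
        (b + dtwSq (p ++ [t] ++ List.replicate a s) (q ++ [s]))
      ≤ dtwSq (p ++ [t] ++ List.replicate a s) (q ++ [s] ++ List.replicate b t) := by
  have hx : (p ++ [t] ++ List.replicate a s).length = p.length + a + 1 := by simp; omega
  have hy : (q ++ [s] ++ List.replicate b t).length = q.length + b + 1 := by simp; omega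
  rw [dtwSq_eq_minPathCost_append_left (m := p.length) (by simp) hy (List.replicate a s),
    dtwSq_eq_minPathCost_append_right (n := q.length) hx (by simp) (List.replicate b t),
    dtwSq_eq_minPathCost hx hy, add_comm a, add_comm b]
  apply minPathCost.min_le_of_row_eq_zero_of_col_eq_zero
  · intro l hl
    rw [mismatch, getD_concat_append_length, getD_concat_append_replicate hl, if_pos rfl]
  · intro k hk
    rw [mismatch, getD_concat_append_length, getD_concat_append_replicate hk, if_pos rfl]
  · intro k hk l hl
    rw [mismatch, getD_concat_append_replicate hk, getD_concat_append_replicate hl, if_neg hst]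

theorem add_dtwSq_le_dtwSq_append_replicate {s t : Bool} (hst : s ≠ t) (p : List Bool)
    (a b : ℕ) :
    a + dtwSq (p ++ [t]) (List.replicate (b + 1) t)
      ≤ dtwSq (p ++ [t] ++ List.replicate a s) (List.replicate (b + 1) t) := by
  have hx : (p ++ [t] ++ List.replicate a s).length = p.length + a + 1 := by simp; omega
  have hy : (List.replicate (b + 1) t).length = b + 1 := List.length_replicate
  rw [dtwSq_eq_minPathCost_append_left (m := p.length) (by simp) hy (List.replicate a s),
    dtwSq_eq_minPathCost hx hy, add_comm a]
  apply minPathCost.add_le_of_row_eq_zero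
  · intro j hj
    rw [mismatch, getD_concat_append_length, List.getD_replicate _ (by omega), if_pos rfl]
  · intro k hk j hj
    rw [mismatch, getD_concat_append_replicate hk, List.getD_replicate _ (by omega), if_neg hst]

theorem dtwSq_append_replicate_eq_add {s t : Bool} (hst : s ≠ t) {p : List Bool}
    (hp : p.getLast? = some t) (a b : ℕ) :
    dtwSq (p ++ List.replicate a s) (List.replicate (b + 1) t) =
      a + dtwSq p (List.replicate (b + 1) t) := by
  obtain ⟨p, rfl⟩ := List.getLast?_eq_some_iff.1 hp
  apply le_antisymm
  · simpa using dtwSq_append_left_le (p := p ++ [t]) (by simp) (by simp) (List.replicate a s)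
  · exact add_dtwSq_le_dtwSq_append_replicate hst p a b

theorem dtwSq_append_replicate_eq_min {s t : Bool} (hst : s ≠ t) {p q : List Bool}
    (hp : p.getLast? = some t) (hq : q.getLast? = some s) (a b : ℕ) :
    dtwSq (p ++ List.replicate a s) (q ++ List.replicate b t) =
      min (a + dtwSq p (q ++ List.replicate b t)) (b + dtwSq (p ++ List.replicate a s) q) := by
  obtain ⟨p, rfl⟩ := List.getLast?_eq_some_iff.1 hp
  obtain ⟨q, rfl⟩ := List.getLast?_eq_some_iff.1 hq
  refine le_antisymm (le_min ?_ ?_) (min_le_dtwSq_append_replicate hst p q a b)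
  · simpa using dtwSq_append_left_le (p := p ++ [t]) (by simp) (by simp) (List.replicate a s)
  · simpa using dtwSq_append_right_le (q := q ++ [s]) (by simp) (by simp) (List.replicate b t)

theorem exists_eq_append_replicate {α : Type*} {x : List α} (hx : x ≠ []) :
    ∃ p s k, x = p ++ List.replicate (k + 1) s ∧ p.getLast? ≠ some s := by
  induction x using List.reverseRecOn with
  | nil => contradiction
  | append_singleton x s ih =>
    by_cases h : x.getLast? = some s
    · obtain ⟨p, t, k, rfl, hp⟩ := ih (by rintro rfl; simp at h)
      obtain rfl : t = s := by simpa [List.getLast?_replicate] using h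
      exact ⟨p, t, k + 1, by rw [List.append_assoc, ← List.replicate_succ'], hp⟩
    · exact ⟨x, s, 0, rfl, h⟩

theorem condense_replicate (k : ℕ) (s : Bool) : condense (List.replicate (k + 1) s) = [s] := by
  induction k with
  | zero => rfl
  | succ k ih => simpa [List.replicate_succ, condense] using ih

theorem condense_append_replicate {p : List Bool} {s : Bool} (hp : p.getLast? ≠ some s)
    (k : ℕ) : condense (p ++ List.replicate (k + 1) s) = condense p ++ [s] := by
  fun_induction condense p with
  | case1 => exact condense_replicate k s
  | case2 a =>
    have ha : a ≠ s := by simpa using hp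
    rw [List.replicate_succ, List.singleton_append, condense, if_neg ha, ← List.replicate_succ,
      condense_replicate, List.singleton_append]
  | case3 a rest ih => simpa [condense] using ih (by simpa using hp)
  | case4 a b rest hab ih => simpa [condense, hab] using ih (by simpa using hp)

theorem condense_eq_nil_iff {x : List Bool} : condense x = [] ↔ x = [] := by
  fun_induction condense x <;> simp_all

theorem blockSizesAux_replicate (c : Bool) (n k : ℕ) :
    blockSizesAux c n (List.replicate k c) = [n + k] := by
  induction k generalizing n with
  | zero => rfl
  | succ k ih => rw [List.replicate_succ, blockSizesAux, if_pos rfl, ih, add_assoc, add_comm 1]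

theorem blockSizesAux_append_replicate {rest : List Bool} {c s : Bool}
    (hs : (c :: rest).getLast? ≠ some s) (n k : ℕ) :
    blockSizesAux c n (rest ++ List.replicate (k + 1) s) = blockSizesAux c n rest ++ [k + 1] := by
  fun_induction blockSizesAux c n rest with
  | case1 c n =>
    have hc : s ≠ c := by simpa [eq_comm] using hs
    rw [List.nil_append, List.replicate_succ, blockSizesAux, if_neg hc, blockSizesAux_replicate,
      add_comm 1, List.singleton_append]
  | case2 n c rest ih => simpa [blockSizesAux] using ih (by simpa using hs)
  | case3 c n a rest h ih => simpa [blockSizesAux, h] using ih (by simpa using hs)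

theorem blockSizes_append_replicate {p : List Bool} {s : Bool} (hp : p.getLast? ≠ some s)
    (k : ℕ) : blockSizes (p ++ List.replicate (k + 1) s) = blockSizes p ++ [k + 1] := by
  cases p with
  | nil => simpa [List.replicate_succ, blockSizes, add_comm] using blockSizesAux_replicate s 1 k
  | cons c rest => exact blockSizesAux_append_replicate hp 1 k

theorem head?_eq_getLast?_of_length_condense_le_one {x : List Bool}
    (h : (condense x).length ≤ 1) : x.head? = x.getLast? := by
  rcases eq_or_ne x [] with rfl | hx
  · rfl
  obtain ⟨p, s, k, rfl, hp⟩ := exists_eq_append_replicate hx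
  obtain rfl : p = [] := by simpa [condense_append_replicate hp, condense_eq_nil_iff] using h
  simp [List.getLast?_replicate, List.head?_replicate]

theorem getLast?_eq_some_not {p : List Bool} {s : Bool} (hne : p ≠ [])
    (hp : p.getLast? ≠ some s) : p.getLast? = some !s := by
  rw [List.getLast?_eq_some_getLast hne] at hp ⊢
  exact congrArg some (Bool.eq_not_of_ne fun h => hp (congrArg some h))

theorem dtwSq_last_symbol_differs_general (x y : List Bool) (hx : 1 < (condense x).length)
    (hy : y ≠ []) (hlast : x.getLast? ≠ y.getLast?) :
    ((condense y).length = 1 →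
      dtwSq x y = (blockSizes x).getLastD 0 +
        dtwSq (x.take (x.length - (blockSizes x).getLastD 0)) y) ∧
    (1 < (condense y).length →
      dtwSq x y = min
        ((blockSizes x).getLastD 0 +
          dtwSq (x.take (x.length - (blockSizes x).getLastD 0)) y)
        ((blockSizes y).getLastD 0 +
          dtwSq x (y.take (y.length - (blockSizes y).getLastD 0)))) := by
  have hxne : x ≠ [] := by
    rintro rfl
    simp [condense] at hx
  obtain ⟨p, s, a, rfl, hp⟩ := exists_eq_append_replicate hxne
  obtain ⟨q, t, b, rfl, hq⟩ := exists_eq_append_replicate hy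
  obtain rfl : s = !t := by
    simpa [List.getLast?_replicate, Bool.eq_not] using hlast
  simp only [blockSizes_append_replicate hp, blockSizes_append_replicate hq,
    condense_append_replicate hp, condense_append_replicate hq, List.getLastD_concat,
    List.length_append, List.length_replicate, List.length_singleton, Nat.add_sub_cancel,
    List.take_left] at hx ⊢
  have hpne : p ≠ [] := by
    rintro rfl
    simp [condense] at hx
  have hpt : p.getLast? = some t := by simpa using getLast?_eq_some_not hpne hp
  constructor
  · intro hn
    obtain rfl : q = [] := by simpa [condense_eq_nil_iff] using hn
    exact dtwSq_append_replicate_eq_add t.not_ne_self hpt (a + 1) b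
  · intro hn
    have hqne : q ≠ [] := by
      rintro rfl
      simp [condense] at hn
    exact dtwSq_append_replicate_eq_min t.not_ne_self hpt (getLast?_eq_some_not hqne hq)
      (a + 1) (b + 1)

/-- recursive case distinction for `dtw(x,y)²` when the first
symbols of `x` and `y` agree but the last symbols differ, where
`a' = |x^{(m')}|` and `b' = |y^{(n')}|` are the last block sizes. -/
theorem dtwSq_last_symbol_differs (x y : List Bool) (hx : x ≠ []) (hy : y ≠ [])
    (hm : (condense y).length ≤ (condense x).length)
    (hhead : x.head? = y.head?) (hlast : x.getLast? ≠ y.getLast?) :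
    ((condense y).length = 1 →
      dtwSq x y = (blockSizes x).getLastD 0 +
        dtwSq (x.take (x.length - (blockSizes x).getLastD 0)) y) ∧
    (1 < (condense y).length →
      dtwSq x y = min
        ((blockSizes x).getLastD 0 +
          dtwSq (x.take (x.length - (blockSizes x).getLastD 0)) y)
        ((blockSizes y).getLastD 0 +
          dtwSq x (y.take (y.length - (blockSizes y).getLastD 0)))) := by
  refine dtwSq_last_symbol_differs_general x y ?_ hy hlast
  by_contra! hx_one
  apply hlast
  rw [← head?_eq_getLast?_of_length_condense_le_one hx_one,
    ← head?_eq_getLast?_of_length_condense_le_one (hm.trans hx_one), hhead]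
end

section
/- Let x be a condensed binary string of length ℓ and let x' be the condensed string of length ℓ + 2 obtained from x by appending the two symbols 1 − x[ℓ] and x[ℓ]. Then for every binary string s with |s̃| ≤ ℓ it holds that dtw(x', s)² ≤ dtw(x, s)² + 1. -/
/-!
An optimal warping path between `x` and `s` ends by aligning their last symbols. When symbols are
appended to `x`, continue the path by aligning each of them with the last symbol of `s`: this costs
one for every appended symbol different from it, and of two complementary symbols exactly one is.
-/

theorem IsWarpingPath.concat {m n : ℕ} {p : List (ℕ × ℕ)} {q : ℕ × ℕ}
    (hp : IsWarpingPath m n p) (hq : wpStep (m - 1, n - 1) q) :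
    IsWarpingPath (q.1 + 1) (q.2 + 1) (p ++ [q]) := by
  obtain ⟨hhead, hlast, hchain, hbound⟩ := hp
  refine ⟨by simp [hhead], by simp, ?_, ?_⟩
  · refine hchain.append (List.isChain_singleton q) ?_
    simpa [hlast] using hq
  · intro r hr
    rcases List.mem_append.1 hr with hr | hr
    · have := hbound r hr
      simp only [wpStep] at hq
      omega
    · simp [List.mem_singleton.1 hr]

theorem exists_isWarpingPath (m n : ℕ) : ∃ p, IsWarpingPath (m + 1) (n + 1) p := by
  induction m with
  | zero =>
    induction n with
    | zero => exact ⟨[(0, 0)], rfl, rfl, List.isChain_singleton _, by simp⟩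
    | succ n ih =>
      obtain ⟨p, hp⟩ := ih
      exact ⟨p ++ [(0, n + 1)], hp.concat (by simp [wpStep])⟩
  | succ m ih =>
    obtain ⟨p, hp⟩ := ih
    exact ⟨p ++ [(m + 1, n)], hp.concat (by simp [wpStep])⟩

theorem dtwSq_le_pathCost {x y : List Bool} {p : List (ℕ × ℕ)}
    (hp : IsWarpingPath x.length y.length p) : dtwSq x y ≤ pathCost x y p :=
  Nat.sInf_le ⟨p, hp, rfl⟩

theorem exists_pathCost_eq_dtwSq {x y : List Bool} (hx : x ≠ []) (hy : y ≠ []) :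
    ∃ p, IsWarpingPath x.length y.length p ∧ pathCost x y p = dtwSq x y := by
  obtain ⟨p, hp⟩ := exists_isWarpingPath (x.length - 1) (y.length - 1)
  rw [Nat.sub_add_cancel (List.length_pos_of_ne_nil hx),
    Nat.sub_add_cancel (List.length_pos_of_ne_nil hy)] at hp
  have hne : {c | ∃ p, IsWarpingPath x.length y.length p ∧ pathCost x y p = c}.Nonempty :=
    ⟨pathCost x y p, p, hp, rfl⟩
  exact Nat.sInf_mem hne

theorem pathCost_path_append (x y : List Bool) (p q : List (ℕ × ℕ)) :
    pathCost x y (p ++ q) = pathCost x y p + pathCost x y q := by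
  simp [pathCost]

theorem pathCost_append_left {x : List Bool} {p : List (ℕ × ℕ)} (hp : ∀ q ∈ p, q.1 < x.length)
    (t y : List Bool) : pathCost (x ++ t) y p = pathCost x y p := by
  unfold pathCost
  congr 1
  refine List.map_congr_left fun q hq => ?_
  rw [List.getD_append _ _ _ _ (hp q hq)]

theorem dtwSq_concat_le {x s : List Bool} (hx : x ≠ []) (hs : s ≠ []) (a : Bool) :
    dtwSq (x ++ [a]) s ≤ dtwSq x s + if a = s.getLast hs then 0 else 1 := by
  obtain ⟨p, hp, hcost⟩ := exists_pathCost_eq_dtwSq hx hs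
  have hx_pos : 0 < x.length := List.length_pos_of_ne_nil hx
  have hs_pos : 0 < s.length := List.length_pos_of_ne_nil hs
  have hpath : IsWarpingPath (x ++ [a]).length s.length (p ++ [(x.length, s.length - 1)]) := by
    have hdown : wpStep (x.length - 1, s.length - 1) (x.length, s.length - 1) :=
      Or.inl ⟨(Nat.sub_add_cancel hx_pos).symm, rfl⟩
    simpa [Nat.sub_add_cancel hs_pos] using hp.concat hdown
  have hnew : (x ++ [a]).getD x.length false = a := by simp
  have hlast : s.getD (s.length - 1) false = s.getLast hs := by
    rw [List.getD_eq_getElem _ _ (Nat.sub_lt hs_pos one_pos), List.getLast_eq_getElem]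
  calc dtwSq (x ++ [a]) s
      ≤ pathCost (x ++ [a]) s (p ++ [(x.length, s.length - 1)]) := dtwSq_le_pathCost hpath
    _ = pathCost x s p + pathCost (x ++ [a]) s [(x.length, s.length - 1)] := by
      rw [pathCost_path_append, pathCost_append_left fun q hq => (hp.2.2.2 q hq).1]
    _ = dtwSq x s + if a = s.getLast hs then 0 else 1 := by
      rw [hcost]
      simp only [pathCost, List.map_singleton, List.sum_singleton, hnew, hlast]

theorem dtwSq_append_le {x s : List Bool} (hx : x ≠ []) (hs : s ≠ []) (t : List Bool) :
    dtwSq (x ++ t) s ≤ dtwSq x s + t.count (!s.getLast hs) := by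
  induction t generalizing x with
  | nil => simp
  | cons a t ih =>
    calc dtwSq (x ++ a :: t) s
        = dtwSq (x ++ [a] ++ t) s := by rw [List.append_assoc, List.singleton_append]
      _ ≤ dtwSq (x ++ [a]) s + t.count (!s.getLast hs) := ih (by simp)
      _ ≤ dtwSq x s + (if a = s.getLast hs then 0 else 1) + t.count (!s.getLast hs) := by
        gcongr
        exact dtwSq_concat_le hx hs a
      _ = dtwSq x s + (a :: t).count (!s.getLast hs) := by
        cases a <;> cases s.getLast hs <;> simp [add_right_comm, ← add_assoc]

theorem extend_increase_dtwSq_by_at_most_one_general {x s : List Bool} (hx : x ≠ [])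
    (hs : s ≠ []) (a : Bool) : dtwSq (x ++ [!a, a]) s ≤ dtwSq x s + 1 := by
  have hcount (b : Bool) : [!a, a].count b = 1 := by cases a <;> cases b <;> rfl
  simpa only [hcount] using dtwSq_append_le hx hs [!a, a]

/-- extending a condensed string `x` of length `ℓ` by the two
symbols `1 - x[ℓ]`, `x[ℓ]` increases the squared dtw distance to any string
`s` with `|s̃| ≤ ℓ` by at most one. -/
theorem extend_increase_dtwSq_by_at_most_one (x : List Bool) (hx : x ≠ [])
    (hc : List.Chain' (· ≠ ·) x) (s : List Bool) (hs : s ≠ [])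
    (hlen : (condense s).length ≤ x.length) :
    dtwSq (x ++ [!x.getLastD false, x.getLastD false]) s ≤ dtwSq x s + 1 :=
  extend_increase_dtwSq_by_at_most_one_general hx hs _
end
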